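/- arXiv:2412.06813 — 2 statements merged into one kernel-verified Lean document; each statement's English description precedes it below -/
import Mathlib

section
/- Every solution (U,B,T) ∈ V×W×Z of the reduced HDG system satisfies the a priori bounds ‖U‖_V + ‖B‖_W ≤ 2ζ²(‖f₁‖ + ‖f₂‖ + ‖f₃‖) and ‖T‖_Z ≤ Pr·Re·‖f₃‖. (Abstract version of the stability bounds (4.7)–(4.8) of Lemma 4.3.) -/
/-- Abstract version of the stability bounds (4.7)–(4.8) of Lemma 4.3: every
solution `(U,B,T)` of the reduced HDG system satisfies
`‖U‖ + ‖B‖ ≤ 2ζ²(‖f₁‖ + ‖f₂‖ + ‖f₃‖)` and `‖T‖ ≤ Pr·Re·‖f₃‖`,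
where `ζ = max{Ha, Rm, Ha·Pr·Re·γ}`. -/
theorem reduced_HDG_solution_a_priori_bounds
    {V W Z : Type*}
    [NormedAddCommGroup V] [InnerProductSpace ℝ V] [FiniteDimensional ℝ V]
    [NormedAddCommGroup W] [InnerProductSpace ℝ W] [FiniteDimensional ℝ W]
    [NormedAddCommGroup Z] [InnerProductSpace ℝ Z] [FiniteDimensional ℝ Z]
    (Ha Rm Pr Re γ ζ : ℝ)
    (hHa : 0 < Ha) (hRm : 0 < Rm) (hPr : 0 < Pr) (hRe : 0 < Re) (hγ : 0 < γ)
    (hζ : ζ = max (max Ha Rm) (Ha * Pr * Re * γ))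
    (aV : V →ₗ[ℝ] V →ₗ[ℝ] ℝ) (aW : W →ₗ[ℝ] W →ₗ[ℝ] ℝ) (aZ : Z →ₗ[ℝ] Z →ₗ[ℝ] ℝ)
    (haV_symm : ∀ v₁ v₂ : V, aV v₁ v₂ = aV v₂ v₁)
    (haW_symm : ∀ w₁ w₂ : W, aW w₁ w₂ = aW w₂ w₁)
    (haZ_symm : ∀ z₁ z₂ : Z, aZ z₁ z₂ = aZ z₂ z₁)
    (haV_coer : ∀ v : V, Ha⁻¹ ^ 2 * ‖v‖ ^ 2 ≤ aV v v)
    (haW_coer : ∀ w : W, Rm⁻¹ ^ 2 * ‖w‖ ^ 2 ≤ aW w w)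
    (haZ_coer : ∀ z : Z, (Pr * Re)⁻¹ * ‖z‖ ^ 2 ≤ aZ z z)
    (c₁ : V →ₗ[ℝ] V →ₗ[ℝ] V →ₗ[ℝ] ℝ)
    (c₂ : V →ₗ[ℝ] W →ₗ[ℝ] W →ₗ[ℝ] ℝ)
    (c₃ : V →ₗ[ℝ] Z →ₗ[ℝ] Z →ₗ[ℝ] ℝ)
    (hc₁_skew : ∀ (φ v : V), c₁ φ v v = 0)
    (hc₃_skew : ∀ (u : V) (z : Z), c₃ u z z = 0)
    (G : Z →ₗ[ℝ] V →ₗ[ℝ] ℝ)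
    (hG_bound : ∀ (T : Z) (v : V), |G T v| ≤ γ * ‖T‖ * ‖v‖)
    (f₁ : V →L[ℝ] ℝ) (f₂ : W →L[ℝ] ℝ) (f₃ : Z →L[ℝ] ℝ)
    (U : V) (B : W) (T : Z)
    (hUB : ∀ (v : V) (w : W),
      aV U v + aW B w + c₁ U U v + c₂ v B B - c₂ U B w
        = f₁ v + f₂ w - G T v)
    (hT : ∀ z : Z, aZ T z + c₃ U T z = f₃ z) :
    ‖U‖ + ‖B‖ ≤ 2 * ζ ^ 2 * (‖f₁‖ + ‖f₂‖ + ‖f₃‖) ∧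
      ‖T‖ ≤ Pr * Re * ‖f₃‖ := by
  have hu := norm_nonneg U
  have hb := norm_nonneg B
  have ht := norm_nonneg T
  have hF1 := norm_nonneg f₁
  have hF2 := norm_nonneg f₂
  have hF3 := norm_nonneg f₃
  have hPR : 0 < Pr * Re := mul_pos hPr hRe
  have e1 : f₁ U ≤ ‖f₁‖ * ‖U‖ := (le_abs_self _).trans (f₁.le_opNorm U)
  have e2 : f₂ B ≤ ‖f₂‖ * ‖B‖ := (le_abs_self _).trans (f₂.le_opNorm B)
  have e3 : f₃ T ≤ ‖f₃‖ * ‖T‖ := (le_abs_self _).trans (f₃.le_opNorm T)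
  have hTb : ‖T‖ ≤ Pr * Re * ‖f₃‖ := by
    have h1 := hT T
    have h2 := haZ_coer T
    rw [hc₃_skew] at h1
    have h3 : (Pr * Re)⁻¹ * ‖T‖ ^ 2 ≤ ‖f₃‖ * ‖T‖ := by linarith
    rw [inv_mul_le_iff₀ hPR] at h3
    rcases ht.eq_or_lt with h | h
    · rw [← h]; positivity
    · refine le_of_mul_le_mul_right ?_ h
      linarith
  refine ⟨?_, hTb⟩
  have hz1 : Ha ≤ ζ := by rw [hζ]; exact (le_max_left _ _).trans (le_max_left _ _)
  have hz2 : Rm ≤ ζ := by rw [hζ]; exact (le_max_right _ _).trans (le_max_left _ _)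
  have hz3 : Ha * Pr * Re * γ ≤ ζ := by rw [hζ]; exact le_max_right _ _
  have hz : 0 < ζ := hHa.trans_le hz1
  have h1 := hUB U B
  rw [hc₁_skew] at h1
  have h2 := haV_coer U
  have h3 := haW_coer B
  have h4 := (neg_le_abs _).trans (hG_bound T U)
  obtain ⟨x, hx⟩ : ∃ x, x = Ha⁻¹ * ‖U‖ := ⟨_, rfl⟩
  obtain ⟨y, hy⟩ : ∃ y, y = Rm⁻¹ * ‖B‖ := ⟨_, rfl⟩
  have hx0 : 0 ≤ x := by rw [hx]; positivity
  have hy0 : 0 ≤ y := by rw [hy]; positivity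
  have hU : ‖U‖ = Ha * x := by rw [hx]; field_simp
  have hB : ‖B‖ = Rm * y := by rw [hy]; field_simp
  rw [← mul_pow, ← hx] at h2
  rw [← mul_pow, ← hy] at h3
  have k1 : ‖f₁‖ * ‖U‖ ≤ ζ * ‖f₁‖ * x := by
    rw [hU]
    calc ‖f₁‖ * (Ha * x) = Ha * (‖f₁‖ * x) := by ring
      _ ≤ ζ * (‖f₁‖ * x) := by gcongr
      _ = _ := by ring
  have k2 : ‖f₂‖ * ‖B‖ ≤ ζ * ‖f₂‖ * y := by
    rw [hB]
    calc ‖f₂‖ * (Rm * y) = Rm * (‖f₂‖ * y) := by ring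
      _ ≤ ζ * (‖f₂‖ * y) := by gcongr
      _ = _ := by ring
  have k3 : γ * ‖T‖ * ‖U‖ ≤ ζ * ‖f₃‖ * x := by
    rw [hU]
    calc γ * ‖T‖ * (Ha * x) ≤ γ * (Pr * Re * ‖f₃‖) * (Ha * x) := by gcongr
      _ = (Ha * Pr * Re * γ) * (‖f₃‖ * x) := by ring
      _ ≤ ζ * (‖f₃‖ * x) := by gcongr
      _ = _ := by ring
  have k4 : x ^ 2 + y ^ 2 ≤ ζ * (‖f₁‖ + ‖f₂‖ + ‖f₃‖) * (x + y) := by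
    have a1 : 0 ≤ ζ * ‖f₁‖ * y := by positivity
    have a2 : 0 ≤ ζ * ‖f₂‖ * x := by positivity
    have a3 : 0 ≤ ζ * ‖f₃‖ * y := by positivity
    linarith
  have k5 : x + y ≤ 2 * ζ * (‖f₁‖ + ‖f₂‖ + ‖f₃‖) := by
    rcases (add_nonneg hx0 hy0).eq_or_lt with h | h
    · rw [← h]; positivity
    · refine le_of_mul_le_mul_right ?_ h
      linarith [sq_nonneg (x - y)]
  calc ‖U‖ + ‖B‖ = Ha * x + Rm * y := by rw [hU, hB]
    _ ≤ ζ * x + ζ * y := by gcongr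
    _ = ζ * (x + y) := by ring
    _ ≤ ζ * (2 * ζ * (‖f₁‖ + ‖f₂‖ + ‖f₃‖)) := by gcongr
    _ = _ := by ring
end

section
/- The reduced HDG system admits at least one solution (U,B,T) ∈ V×W×Z. (Abstract finite-dimensional version of the existence assertion of Lemma 4.3, proved in the paper via Schaefer's fixed point theorem.) -/
open MeasureTheory Set Metric
open scoped NNReal RealInnerProductSpace

/-- det(1+tA) is polynomial in t with continuous coefficients. -/
lemma aux_det_poly {E : Type*} [NormedAddCommGroup E] [NormedSpace ℝ E]
    [FiniteDimensional ℝ E] :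
    ∃ (κ : Type) (_ : Fintype κ) (d : κ → ℕ) (c : κ → (E →L[ℝ] E) → ℝ),
      (∀ k, Continuous (c k)) ∧
      ∀ (t : ℝ) (A : E →L[ℝ] E), (1 + t • A).det = ∑ k, t ^ d k * c k A := by
  classical
  let b := Module.finBasis ℝ E
  let n := Module.finrank ℝ E
  let m : (E →L[ℝ] E) → Matrix (Fin n) (Fin n) ℝ := fun A => LinearMap.toMatrix b b (A : E →ₗ[ℝ] E)
  have hm : ∀ i j, Continuous fun A => m A i j := by
    intro i j
    let l : (E →L[ℝ] E) →ₗ[ℝ] ℝ :=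
      { toFun := fun A => m A i j
        map_add' := by intro A B; simp [m]
        map_smul' := by intro A B; simp [m] }
    exact l.continuous_of_finiteDimensional
  refine ⟨Equiv.Perm (Fin n) × Finset (Fin n), inferInstance, fun k => (Finset.univ \ k.2).card,
    fun k A => (Equiv.Perm.sign k.1 : ℤ) * ((∏ i ∈ k.2, (1 : Matrix (Fin n) (Fin n) ℝ) (k.1 i) i) *
      ∏ i ∈ Finset.univ \ k.2, m A (k.1 i) i), ?_, ?_⟩
  · intro k
    exact continuous_const.mul (continuous_const.mul (continuous_finsetProd _ fun i _ => hm _ _))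
  · intro t A
    have h1 : (1 + t • A).det = (1 + t • m A).det := by
      rw [ContinuousLinearMap.det, ← LinearMap.det_toMatrix b]
      congr 1
      simp [m, LinearMap.toMatrix_one]
    rw [h1, Matrix.det_apply', Fintype.sum_prod_type]
    refine Finset.sum_congr rfl fun σ _ => ?_
    simp only [Matrix.add_apply, Matrix.smul_apply, smul_eq_mul]
    rw [Finset.prod_add, Finset.mul_sum, Finset.powerset_univ]
    refine Finset.sum_congr rfl fun s _ => ?_
    rw [Finset.prod_mul_distrib, Finset.prod_const]
    ring

/-- extension by zero of Lipschitz function vanishing on the sphere -/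
lemma aux_lip_ext {E : Type*} [NormedAddCommGroup E] [NormedSpace ℝ E]
    (g : E → E) (ρ : ℝ) (L : ℝ≥0) (hg : LipschitzOnWith L g (closedBall 0 ρ))
    (h0 : ∀ x, ‖x‖ = ρ → g x = 0) (g' : E → E) (hin : ∀ x, ‖x‖ ≤ ρ → g' x = g x)
    (hout : ∀ x, ρ < ‖x‖ → g' x = 0) : LipschitzWith L g' := by
  have key : ∀ x y : E, ‖x‖ ≤ ρ → ρ < ‖y‖ → dist (g' x) (g' y) ≤ L * dist x y := by
    intro x y hx hy
    have hc : ContinuousOn (fun s : ℝ => ‖AffineMap.lineMap (k := ℝ) x y s‖) (Icc 0 1) := by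
      apply Continuous.continuousOn
      exact (AffineMap.lineMap_continuous).norm
    have := intermediate_value_Icc (zero_le_one) hc
    obtain ⟨s, hs, hsρ⟩ := this (show ρ ∈ _ from ⟨by simpa using hx, by simpa using hy.le⟩)
    simp only at hsρ
    set z := AffineMap.lineMap (k := ℝ) x y s with hz
    have h1 := hg.dist_le_mul x (by simpa using hx) z (by simp [hsρ])
    rw [hin x hx, hout y hy, ← h0 z hsρ]
    refine h1.trans ?_
    gcongr
    rw [hz, dist_left_lineMap]
    have : ‖s‖ ≤ 1 := by rw [Real.norm_of_nonneg hs.1]; exact hs.2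
    nlinarith [dist_nonneg (x := x) (y := y)]
  refine LipschitzWith.of_dist_le_mul fun x y => ?_
  rcases le_or_gt ‖x‖ ρ with hx | hx <;> rcases le_or_gt ‖y‖ ρ with hy | hy
  · rw [hin x hx, hin y hy]
    exact hg.dist_le_mul x (by simpa using hx) y (by simpa using hy)
  · exact key x y hx hy
  · rw [dist_comm, dist_comm x]; exact key y x hy hx
  · rw [hout x hx, hout y hy]; simp; positivity

/-- no C¹ retraction of ball on sphere -/
lemma aux_no_retract {E : Type*} [NormedAddCommGroup E] [InnerProductSpace ℝ E]
    [FiniteDimensional ℝ E] (ρ : ℝ) (hρ : 0 < ρ) (r : E → E) (hr : ContDiff ℝ 1 r)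
    (hn : ∀ x, ‖r x‖ = ρ) (hid : ∀ x, ‖x‖ = ρ → r x = x) : False := by
  let _ : MeasurableSpace E := borel E
  have _ : BorelSpace E := ⟨rfl⟩
  let μ : Measure E := Measure.addHaar
  let g : E → E := fun x => r x - x
  have hg : ContDiff ℝ 1 g := hr.sub contDiff_id
  have hgd : Differentiable ℝ g := hg.differentiable (by norm_num)
  let A : E → E →L[ℝ] E := fderiv ℝ g
  have hA : Continuous A := hg.continuous_fderiv (by norm_num)
  let K := closedBall (0 : E) ρ
  have hK : IsCompact K := isCompact_closedBall _ _
  obtain ⟨C, hC⟩ := hK.exists_bound_of_continuousOn hA.continuousOn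
  let L : ℝ≥0 := ⟨max C 1, by positivity⟩
  have hL1 : (1 : ℝ) ≤ L := le_max_right _ _
  have hLA : ∀ x ∈ K, ‖A x‖ ≤ L := fun x hx => (hC x hx).trans (le_max_left _ _)
  have hlip : LipschitzOnWith L g K :=
    (convex_closedBall _ _).lipschitzOnWith_of_nnnorm_fderiv_le (𝕜 := ℝ)
      (fun x _ => hgd x) (fun x hx => hLA x hx)
  have hg0 : ∀ x, ‖x‖ = ρ → g x = 0 := fun x hx => by simp [g, hid x hx]
  classical
  let g' : E → E := fun x => if ‖x‖ ≤ ρ then g x else 0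
  have hin : ∀ x, ‖x‖ ≤ ρ → g' x = g x := fun x hx => by simp [g', hx]
  have hout : ∀ x, ρ < ‖x‖ → g' x = 0 := fun x hx => by simp [g', hx]
  have hlip' : LipschitzWith L g' := aux_lip_ext g ρ L hlip hg0 g' hin hout
  -- determinant positivity
  have hdet : ∃ ε > 0, ∀ M : E →L[ℝ] E, ‖M - 1‖ < ε → 0 < M.det := by
    have hc : Continuous fun M : E →L[ℝ] E => M.det := ContinuousLinearMap.continuous_det
    have h1 : (0:ℝ) < (1 : E →L[ℝ] E).det := by
      simp [ContinuousLinearMap.det]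
    have := (hc.tendsto 1).eventually (lt_mem_nhds h1)
    obtain ⟨ε, he, h⟩ := Metric.eventually_nhds_iff.1 this
    exact ⟨ε, he, fun M hM => h (by rwa [dist_eq_norm])⟩
  obtain ⟨ε, hε, hdet⟩ := hdet
  let δ : ℝ := min ε 1 / (2 * L)
  have hδ : 0 < δ := by positivity
  have hδ1 : ∀ t, 0 ≤ t → t ≤ δ → t * L < 1 ∧ t * L < ε := by
    intro t h0 ht
    have h2 : t * L ≤ min ε 1 / 2 := by
      calc t * L ≤ δ * L := by gcongr
        _ = min ε 1 / 2 := by simp only [δ]; field_simp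
    have := min_le_left ε 1
    have := min_le_right ε 1
    constructor <;> linarith [lt_min hε one_pos]
  -- volume
  have hvol : ∀ t, 0 ≤ t → t ≤ δ → ∫ x in K, (1 + t • A x).det ∂μ = μ.real K := by
    intro t h0 ht
    obtain ⟨ht1, htε⟩ := hδ1 t h0 ht
    let f : E → E := fun x => x + t • g x
    have hder : ∀ x ∈ K, HasFDerivWithinAt f (1 + t • A x) K x := by
      intro x hx
      exact ((hasFDerivAt_id x).add ((hgd x).hasFDerivAt.const_smul t)).hasFDerivWithinAt
    obtain ⟨q, hqe⟩ : ∃ q : ℝ≥0, (q : ℝ) = t * L := ⟨⟨t * L, by positivity⟩, rfl⟩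
    have hq : q < 1 := by rw [← NNReal.coe_lt_coe, hqe]; simpa using ht1
    have hlt : ∀ y : E, LipschitzWith q fun x => y - t • g' x := by
      intro y
      refine LipschitzWith.of_dist_le_mul fun a b => ?_
      have := hlip'.dist_le_mul a b
      rw [dist_sub_left, dist_smul₀, Real.norm_of_nonneg h0]
      calc t * dist (g' a) (g' b) ≤ t * (L * dist a b) := by gcongr
        _ = q * dist a b := by rw [hqe]; ring
    have hinj : InjOn f K := by
      intro x hx y hy hxy
      have hxn : ‖x‖ ≤ ρ := by simpa [K] using hx
      have hyn : ‖y‖ ≤ ρ := by simpa [K] using hy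
      have cw : ContractingWith q fun z => f x - t • g' z := ⟨hq, hlt _⟩
      refine cw.fixedPoint_unique' ?_ ?_
      · change f x - t • g' x = x; simp [f, hin x hxn]
      · change f x - t • g' y = y; rw [hxy]; simp [f, hin y hyn]
    have himg : f '' K = K := by
      apply Subset.antisymm
      · rintro _ ⟨x, hx, rfl⟩
        have hxn : ‖x‖ ≤ ρ := by simpa [K] using hx
        by_contra hy
        have hyn : ρ < ‖f x‖ := by simpa [K] using hy
        have cw : ContractingWith q fun z => f x - t • g' z := ⟨hq, hlt _⟩
        have : x = f x := by
          refine cw.fixedPoint_unique' ?_ ?_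
          · change f x - t • g' x = x; simp [f, hin x hxn]
          · change f x - t • g' (f x) = f x; simp [hout _ hyn]
        rw [← this] at hyn; linarith
      · intro y hy
        have hyn : ‖y‖ ≤ ρ := by simpa [K] using hy
        have cw : ContractingWith q fun z => y - t • g' z := ⟨hq, hlt _⟩
        have hfp : y - t • g' (cw.fixedPoint) = cw.fixedPoint := cw.fixedPoint_isFixedPt
        set x := cw.fixedPoint
        rcases le_or_gt ‖x‖ ρ with hx | hx
        · refine ⟨x, by simpa [K] using hx, ?_⟩
          rw [hin x hx] at hfp
          change x + t • g x = y
          nth_rewrite 1 [← hfp]; simp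
        · rw [hout x hx] at hfp
          simp at hfp
          rw [← hfp] at hx; linarith
    have hcv := integral_image_eq_integral_abs_det_fderiv_smul μ
      (isClosed_closedBall.measurableSet : MeasurableSet K) hder hinj (fun _ => (1:ℝ))
    rw [himg] at hcv
    simp only [smul_eq_mul, mul_one, integral_const, measureReal_restrict_apply_univ] at hcv
    rw [hcv]
    refine setIntegral_congr_fun isClosed_closedBall.measurableSet fun x hx => ?_
    refine (abs_of_pos (hdet _ ?_)).symm
    rw [add_sub_cancel_left, norm_smul, Real.norm_of_nonneg h0]
    exact lt_of_le_of_lt (mul_le_mul_of_nonneg_left (hLA x hx) h0) htε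
  obtain ⟨κ, _, d, c, hcc, hcd⟩ := aux_det_poly (E := E)
  let P : Polynomial ℝ := ∑ k, Polynomial.C (∫ x in K, c k (A x) ∂μ) * Polynomial.X ^ d k
  have hP : ∀ t, ∫ x in K, (1 + t • A x).det ∂μ = P.eval t := by
    intro t
    simp only [hcd, P, Polynomial.eval_finsetSum, Polynomial.eval_mul, Polynomial.eval_C,
      Polynomial.eval_pow, Polynomial.eval_X]
    rw [integral_finsetSum]
    · refine Finset.sum_congr rfl fun k _ => ?_
      rw [integral_const_mul, mul_comm]
    · intro k _
      exact (((hcc k).comp hA).const_smul (t ^ d k)).continuousOn.integrableOn_compact hK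
  have hPc : P = Polynomial.C (μ.real K) := by
    apply Polynomial.eq_of_infinite_eval_eq
    refine Set.Infinite.mono ?_ (Icc_infinite hδ)
    intro t ht
    simp only [mem_ofPred_eq, Polynomial.eval_C]
    rw [← hP, hvol t ht.1 ht.2]
  have h1 := hP 1
  rw [hPc, Polynomial.eval_C] at h1
  have hz : ∀ x, (1 + (1:ℝ) • A x).det = 0 := by
    intro x
    have hrd : HasFDerivAt r (1 + (1:ℝ) • A x) x := by
      have := (hasFDerivAt_id x).add ((hgd x).hasFDerivAt.const_smul (1:ℝ))
      refine this.congr_of_eventuallyEq (Filter.Eventually.of_forall fun y => ?_)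
      simp [g]
    set D := 1 + (1:ℝ) • A x
    by_contra hne
    have hsurj : Function.Surjective D := by
      have hu : IsUnit (D : E →ₗ[ℝ] E) := by
        rw [LinearMap.isUnit_iff_isUnit_det]; exact isUnit_iff_ne_zero.2 hne
      exact ((Module.End.isUnit_iff _).1 hu).2
    obtain ⟨v, hv⟩ := hsurj (r x)
    have h2 := hrd.norm_sq
    have h3 : HasFDerivAt (fun y => ‖r y‖ ^ 2) (0 : E →L[ℝ] ℝ) x := by
      simp only [hn]; exact hasFDerivAt_const _ _
    have h4 := congrArg (fun l : E →L[ℝ] ℝ => l v) (h2.unique h3)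
    simp [hv, hn] at h4
    exact hρ.ne' h4
  simp only [hz, integral_zero] at h1
  have : 0 < μ.real K := by
    apply ENNReal.toReal_pos
    · exact (measure_closedBall_pos μ 0 hρ).ne'
    · exact hK.measure_lt_top.ne
  linarith

lemma aux_zero {E : Type*} [NormedAddCommGroup E] [InnerProductSpace ℝ E]
    [FiniteDimensional ℝ E] (R : ℝ) (hR : 0 < R) (F : E → E) (hF : ContDiff ℝ 1 F)
    (hpos : ∀ x, R ≤ ‖x‖ → 0 < ⟪F x, x⟫) : ∃ x, F x = 0 := by
  by_contra! hne
  let χ : ContDiffBump (0 : E) := ⟨R, 2 * R, hR, by linarith⟩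
  let H : E → E := fun x => (1 - χ x) • x + χ x • F x
  have hH : ContDiff ℝ 1 H :=
    ((contDiff_const.sub χ.contDiff).smul contDiff_id).add (χ.contDiff.smul hF)
  have hH0 : ∀ x, H x ≠ 0 := by
    intro x h
    rcases le_or_gt ‖x‖ R with hx | hx
    · have : χ x = 1 := χ.one_of_mem_closedBall (by simpa [χ] using hx)
      simp [H, this] at h
      exact hne x h
    · have h2 : ⟪H x, x⟫ = 0 := by rw [h, inner_zero_left]
      simp only [H, inner_add_left, real_inner_smul_left, real_inner_self_eq_norm_sq] at h2
      have h3 := hpos x hx.le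
      have h4 : 0 ≤ χ x := χ.nonneg
      have h5 : χ x ≤ 1 := χ.le_one
      have h6 : 0 < ‖x‖ ^ 2 := by have := hR.trans hx; positivity
      rcases h4.eq_or_lt with h7 | h7
      · rw [← h7] at h2; simp at h2; rw [h2] at hx; simp at hx; linarith
      · nlinarith [mul_pos h7 h3, mul_nonneg (sub_nonneg.2 h5) h6.le]
  refine aux_no_retract (2 * R) (by linarith) (fun x => (2 * R / ‖H x‖) • H x) ?_ ?_ ?_
  · exact (contDiff_const.div (hH.norm ℝ hH0) fun x => norm_ne_zero_iff.2 (hH0 x)).smul hH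
  · intro x
    have := norm_ne_zero_iff.2 (hH0 x)
    rw [norm_smul, norm_div, norm_norm, div_mul_cancel₀ _ this, Real.norm_of_nonneg (by linarith)]
  · intro x hx
    have : χ x = 0 := χ.zero_of_le_dist (by simp [χ, hx])
    have h2 : (2 * R) ≠ 0 := by linarith
    simp only [H, this]
    simp [hx, hR.ne']

lemma aux_zero_dual {P : Type*} [NormedAddCommGroup P] [NormedSpace ℝ P]
    [FiniteDimensional ℝ P] (R : ℝ) (hR : 0 < R) (Φ : P → P →L[ℝ] ℝ) (hΦ : ContDiff ℝ 1 Φ)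
    (hpos : ∀ x, R ≤ ‖x‖ → 0 < Φ x x) : ∃ x, Φ x = 0 := by
  let e : P ≃L[ℝ] EuclideanSpace ℝ (Fin (Module.finrank ℝ P)) := toEuclidean
  let s : EuclideanSpace ℝ (Fin (Module.finrank ℝ P)) →L[ℝ] P := e.symm
  let F : EuclideanSpace ℝ (Fin (Module.finrank ℝ P)) → EuclideanSpace ℝ (Fin (Module.finrank ℝ P)) :=
    fun y => (InnerProductSpace.toDual ℝ _).symm ((Φ (s y)).comp s)
  have hFi : ∀ y v, ⟪F y, v⟫ = Φ (s y) (s v) := by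
    intro y v
    simp [F, InnerProductSpace.toDual_symm_apply]
  have hF : ContDiff ℝ 1 F := by
    apply (InnerProductSpace.toDual ℝ _).symm.contDiff.comp
    exact (hΦ.comp s.contDiff).clm_comp contDiff_const
  let N : ℝ := ‖(e : P →L[ℝ] EuclideanSpace ℝ (Fin (Module.finrank ℝ P)))‖ + 1
  have hes : ∀ y, e (s y) = y := fun y => e.apply_symm_apply y
  obtain ⟨y, hy⟩ := aux_zero (N * R) (by positivity) F hF (by
    intro y hy
    rw [hFi]
    apply hpos
    by_contra! h
    have h1 : ‖y‖ ≤ ‖(e : P →L[ℝ] EuclideanSpace ℝ (Fin (Module.finrank ℝ P)))‖ * ‖s y‖ := by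
      have := (e : P →L[ℝ] EuclideanSpace ℝ (Fin (Module.finrank ℝ P))).le_opNorm (s y)
      simpa [hes] using this
    have : ‖(e : P →L[ℝ] EuclideanSpace ℝ (Fin (Module.finrank ℝ P)))‖ * ‖s y‖ ≤ ‖(e : P →L[ℝ] EuclideanSpace ℝ (Fin (Module.finrank ℝ P)))‖ * R := by gcongr
    simp only [N] at hy
    linarith)
  refine ⟨s y, ?_⟩
  ext v
  have := hFi y (e v)
  rw [hy, inner_zero_left] at this
  simpa [s] using this.symm

lemma aux_bilin {X P Q : Type*} [NormedAddCommGroup X] [NormedSpace ℝ X]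
    [NormedAddCommGroup P] [NormedSpace ℝ P] [FiniteDimensional ℝ P]
    [NormedAddCommGroup Q] [NormedSpace ℝ Q] [FiniteDimensional ℝ Q]
    (b : P →ₗ[ℝ] Q →ₗ[ℝ] ℝ) (f : X → P) (g : X → Q) (hf : ContDiff ℝ 1 f) (hg : ContDiff ℝ 1 g) :
    ContDiff ℝ 1 fun x => b (f x) (g x) := by
  let l : P →L[ℝ] Q →L[ℝ] ℝ :=
    LinearMap.toContinuousLinearMap ((LinearMap.toContinuousLinearMap (𝕜 := ℝ) (E := Q) (F' := ℝ)).toLinearMap ∘ₗ b)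
  exact (l.contDiff.comp hf).clm_apply hg

lemma aux_lin {X P : Type*} [NormedAddCommGroup X] [NormedSpace ℝ X]
    [NormedAddCommGroup P] [NormedSpace ℝ P] [FiniteDimensional ℝ P]
    (b : P →ₗ[ℝ] ℝ) (f : X → P) (hf : ContDiff ℝ 1 f) :
    ContDiff ℝ 1 fun x => b (f x) :=
  (LinearMap.toContinuousLinearMap b).contDiff.comp hf

/-- Abstract finite-dimensional version of the existence assertion of
Lemma 4.3: the reduced HDG system admits at least one solution `(U,B,T)`. -/
theorem reduced_HDG_existence
    {V W Z : Type*}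
    [NormedAddCommGroup V] [InnerProductSpace ℝ V] [FiniteDimensional ℝ V]
    [NormedAddCommGroup W] [InnerProductSpace ℝ W] [FiniteDimensional ℝ W]
    [NormedAddCommGroup Z] [InnerProductSpace ℝ Z] [FiniteDimensional ℝ Z]
    (Ha Rm Pr Re γ : ℝ)
    (hHa : 0 < Ha) (hRm : 0 < Rm) (hPr : 0 < Pr) (hRe : 0 < Re) (hγ : 0 < γ)
    (aV : V →ₗ[ℝ] V →ₗ[ℝ] ℝ) (aW : W →ₗ[ℝ] W →ₗ[ℝ] ℝ) (aZ : Z →ₗ[ℝ] Z →ₗ[ℝ] ℝ)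
    (haV_symm : ∀ v₁ v₂ : V, aV v₁ v₂ = aV v₂ v₁)
    (haW_symm : ∀ w₁ w₂ : W, aW w₁ w₂ = aW w₂ w₁)
    (haZ_symm : ∀ z₁ z₂ : Z, aZ z₁ z₂ = aZ z₂ z₁)
    (haV_coer : ∀ v : V, Ha⁻¹ ^ 2 * ‖v‖ ^ 2 ≤ aV v v)
    (haW_coer : ∀ w : W, Rm⁻¹ ^ 2 * ‖w‖ ^ 2 ≤ aW w w)
    (haZ_coer : ∀ z : Z, (Pr * Re)⁻¹ * ‖z‖ ^ 2 ≤ aZ z z)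
    (c₁ : V →ₗ[ℝ] V →ₗ[ℝ] V →ₗ[ℝ] ℝ)
    (c₂ : V →ₗ[ℝ] W →ₗ[ℝ] W →ₗ[ℝ] ℝ)
    (c₃ : V →ₗ[ℝ] Z →ₗ[ℝ] Z →ₗ[ℝ] ℝ)
    (hc₁_skew : ∀ (φ v : V), c₁ φ v v = 0)
    (hc₃_skew : ∀ (u : V) (z : Z), c₃ u z z = 0)
    (G : Z →ₗ[ℝ] V →ₗ[ℝ] ℝ)
    (hG_bound : ∀ (T : Z) (v : V), |G T v| ≤ γ * ‖T‖ * ‖v‖)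
    (f₁ : V →L[ℝ] ℝ) (f₂ : W →L[ℝ] ℝ) (f₃ : Z →L[ℝ] ℝ) :
    ∃ (U : V) (B : W) (T : Z),
      (∀ (v : V) (w : W),
        aV U v + aW B w + c₁ U U v + c₂ v B B - c₂ U B w
          = f₁ v + f₂ w - G T v) ∧
      (∀ z : Z, aZ T z + c₃ U T z = f₃ z) := by
  obtain ⟨α, hα, hα'⟩ : ∃ α : ℝ, 0 < α ∧ ∀ v : V, α * ‖v‖ ^ 2 ≤ aV v v :=
    ⟨_, by positivity, haV_coer⟩
  obtain ⟨β, hβ, hβ'⟩ : ∃ β : ℝ, 0 < β ∧ ∀ v : W, β * ‖v‖ ^ 2 ≤ aW v v :=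
    ⟨_, by positivity, haW_coer⟩
  obtain ⟨ζ, hζ, hζ'⟩ : ∃ ζ : ℝ, 0 < ζ ∧ ∀ v : Z, ζ * ‖v‖ ^ 2 ≤ aZ v v :=
    ⟨_, by positivity, haZ_coer⟩
  let l : ℝ := γ ^ 2 / (α * ζ)
  have hl : 0 < l := by positivity
  have hlζ : l * ζ = γ ^ 2 / α := by simp only [l]; field_simp
  let Φ : V × W × Z → (V × W × Z →L[ℝ] ℝ) := fun x => LinearMap.toContinuousLinearMap
    { toFun := fun y => aV x.1 y.1 + aW x.2.1 y.2.1 + c₁ x.1 x.1 y.1 + c₂ y.1 x.2.1 x.2.1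
        - c₂ x.1 x.2.1 y.2.1 - (f₁ y.1 + f₂ y.2.1 - G x.2.2 y.1)
        + l * (aZ x.2.2 y.2.2 + c₃ x.1 x.2.2 y.2.2 - f₃ y.2.2)
      map_add' := by
        intro y y'
        simp only [Prod.fst_add, Prod.snd_add, map_add, LinearMap.add_apply]
        ring
      map_smul' := by
        intro k y
        simp only [Prod.smul_fst, Prod.smul_snd, map_smul, LinearMap.smul_apply, smul_eq_mul,
          RingHom.id_apply]
        ring }
  have hΦa : ∀ x y, Φ x y = aV x.1 y.1 + aW x.2.1 y.2.1 + c₁ x.1 x.1 y.1 + c₂ y.1 x.2.1 x.2.1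
        - c₂ x.1 x.2.1 y.2.1 - (f₁ y.1 + f₂ y.2.1 - G x.2.2 y.1)
        + l * (aZ x.2.2 y.2.2 + c₃ x.1 x.2.2 y.2.2 - f₃ y.2.2) := fun x y => rfl
  have hU : ContDiff ℝ 1 fun x : V × W × Z => x.1 := contDiff_fst
  have hB : ContDiff ℝ 1 fun x : V × W × Z => x.2.1 := contDiff_fst.comp contDiff_snd
  have hT : ContDiff ℝ 1 fun x : V × W × Z => x.2.2 := contDiff_snd.comp contDiff_snd
  have hΦ : ContDiff ℝ 1 Φ := by
    rw [contDiff_clm_apply_iff]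
    intro y
    simp only [hΦa]
    have e1 := aux_lin (aV.flip y.1) _ hU
    have e2 := aux_lin (aW.flip y.2.1) _ hB
    have e3 := aux_bilin (c₁.compr₂ (LinearMap.applyₗ y.1)) _ _ hU hU
    have e4 := aux_bilin (c₂ y.1) _ _ hB hB
    have e5 := aux_bilin (c₂.compr₂ (LinearMap.applyₗ y.2.1)) _ _ hU hB
    have e6 := aux_lin (G.flip y.1) _ hT
    have e7 := aux_lin (aZ.flip y.2.2) _ hT
    have e8 := aux_bilin (c₃.compr₂ (LinearMap.applyₗ y.2.2)) _ _ hU hT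
    exact ((((((e1.add e2).add e3).add e4).sub e5).sub (contDiff_const.sub e6)).add
      (contDiff_const.mul ((e7.add e8).sub contDiff_const)))
  let k : ℝ := min (α / 2) (min β (γ ^ 2 / (2 * α)))
  have hk : 0 < k := by positivity
  have hk1 : k ≤ α / 2 := min_le_left _ _
  have hk2 : k ≤ β := (min_le_right _ _).trans (min_le_left _ _)
  have hk3 : k ≤ γ ^ 2 / (2 * α) := (min_le_right _ _).trans (min_le_right _ _)
  let C : ℝ := ‖f₁‖ + ‖f₂‖ + l * ‖f₃‖
  have hC : 0 ≤ C := by positivity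
  obtain ⟨x, hx⟩ := aux_zero_dual (C / k + 1) (by positivity) Φ hΦ (by
    rintro ⟨U, B, T⟩ hx
    rw [hΦa]
    simp only [hc₁_skew, hc₃_skew]
    have hm1 : ‖U‖ ≤ ‖(U, B, T)‖ := norm_fst_le (U, B, T)
    have hm2 : ‖B‖ ≤ ‖(U, B, T)‖ := (norm_fst_le (B, T)).trans (norm_snd_le (U, B, T))
    have hm3 : ‖T‖ ≤ ‖(U, B, T)‖ := (norm_snd_le (B, T)).trans (norm_snd_le (U, B, T))
    have hm4 : ‖(U, B, T)‖ ^ 2 ≤ ‖U‖ ^ 2 + ‖B‖ ^ 2 + ‖T‖ ^ 2 := by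
      simp only [Prod.norm_mk]
      rcases max_choice ‖U‖ (max ‖B‖ ‖T‖) with h | h
      · rw [h]; linarith [sq_nonneg ‖B‖, sq_nonneg ‖T‖]
      · rw [h]
        rcases max_choice ‖B‖ ‖T‖ with h | h <;> rw [h] <;>
          linarith [sq_nonneg ‖U‖, sq_nonneg ‖B‖, sq_nonneg ‖T‖]
    set m := ‖(U, B, T)‖
    have hG := (abs_le.1 (hG_bound T U)).1
    have b1 : f₁ U ≤ ‖f₁‖ * m := (le_abs_self _).trans ((f₁.le_opNorm U).trans (by gcongr))
    have b2 : f₂ B ≤ ‖f₂‖ * m := (le_abs_self _).trans ((f₂.le_opNorm B).trans (by gcongr))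
    have b3 : f₃ T ≤ ‖f₃‖ * m := (le_abs_self _).trans ((f₃.le_opNorm T).trans (by gcongr))
    have b3' : l * f₃ T ≤ l * (‖f₃‖ * m) := by gcongr
    have a3 : γ ^ 2 / α * ‖T‖ ^ 2 ≤ l * aZ T T := by
      rw [← hlζ, mul_assoc]; gcongr; exact hζ' T
    have a1 := hα' U
    have a2 := hβ' B
    have hy : γ * ‖T‖ * ‖U‖ ≤ α / 2 * ‖U‖ ^ 2 + γ ^ 2 / (2 * α) * ‖T‖ ^ 2 := by
      have : 0 ≤ (α * ‖U‖ - γ * ‖T‖) ^ 2 / (2 * α) := by positivity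
      have e : (α * ‖U‖ - γ * ‖T‖) ^ 2 / (2 * α) =
        α / 2 * ‖U‖ ^ 2 + γ ^ 2 / (2 * α) * ‖T‖ ^ 2 - γ * ‖T‖ * ‖U‖ := by field_simp; ring
      linarith
    have hd : γ ^ 2 / α * ‖T‖ ^ 2 = 2 * (γ ^ 2 / (2 * α) * ‖T‖ ^ 2) := by field_simp
    have k1 : k * ‖U‖ ^ 2 ≤ α / 2 * ‖U‖ ^ 2 := by gcongr
    have k2 : k * ‖B‖ ^ 2 ≤ β * ‖B‖ ^ 2 := by gcongr
    have k3 : k * ‖T‖ ^ 2 ≤ γ ^ 2 / (2 * α) * ‖T‖ ^ 2 := by gcongr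
    have k4 : k * m ^ 2 ≤ k * (‖U‖ ^ 2 + ‖B‖ ^ 2 + ‖T‖ ^ 2) := by gcongr
    have hmpos : 0 < m := lt_of_lt_of_le (by positivity) hx
    have hfin : C * m < k * m ^ 2 := by
      have : C < k * m := by
        calc C < k * (C / k + 1) := by rw [mul_add, mul_div_cancel₀ _ hk.ne']; linarith
          _ ≤ k * m := by gcongr
      calc C * m < (k * m) * m := mul_lt_mul_of_pos_right this hmpos
        _ = k * m ^ 2 := by ring
    have hCm : C * m = ‖f₁‖ * m + ‖f₂‖ * m + l * (‖f₃‖ * m) := by simp only [C]; ring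
    linarith)
  refine ⟨x.1, x.2.1, x.2.2, ?_, ?_⟩
  · intro v w
    have := congrArg (fun L => L (v, w, (0 : Z))) hx
    simp only [hΦa, map_zero, ContinuousLinearMap.zero_apply] at this
    linarith
  · intro z
    have := congrArg (fun L => L ((0 : V), (0 : W), z)) hx
    simp only [hΦa, map_zero, ContinuousLinearMap.zero_apply, LinearMap.zero_apply] at this
    have h2 : l * (aZ x.2.2 z + c₃ x.1 x.2.2 z - f₃ z) = 0 := by linarith
    have := (mul_eq_zero.1 h2).resolve_left hl.ne'
    linarith
end
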